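/- arXiv:2404.05948 — 2 statements merged into one kernel-verified Lean document; each statement's English description precedes it below -/
import Mathlib

section
/- There is a constant C ≥ 0 such that for every precision p ≥ 6, every symmetric round-to-nearest function RN, all o_x, o_y ∈ [1, 1/(8u) − 2] with u = 2^(−p), and all x_h, x_l, y_h, y_l ∈ F_p with |x_l| ≤ o_x·u·|x_h|, |y_l| ≤ o_y·u·|y_h|, x_h·y_h < 0 and 2·min(|x_h|, |y_h|) ≥ max(|x_h|, |y_h|) (the hypothesis of Sterbenz's lemma), the output of accurate double-word addition with rounding RN satisfies |z_h + z_l − S| ≤ (4u² + C·u³)·|S|, where S = x_h + x_l + y_h + y_l. -/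
/-!
The Sterbenz hypothesis makes `x_h + y_h` a floating-point number, so `s_l = 0` and `c = t_h`.
The bounds on the low words give `|t_h| ≤ min |x_h| |y_h|`, hence there is an exponent `e` such that
`s_h` and `t_h` are multiples of `2^e` and `|t_h| < 2^(p+e)`. This is all that is needed for
`Fast2Sum(s_h, t_h)` to be exact (`fast2Sum_exact`), even though `|s_h| < |t_h|` may hold.
As `2Sum` is exact as well (`twoSum_exact`), only the rounding `w = RN(t_l + v_l)` can be inexact.

* If `|s_h + t_h| ≤ 2^(p+e)`, then `v_l = 0`, so `w = t_l`, and nothing is lost.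
* Otherwise `|t_h| < |s_h + t_h|`, so `t_l` and `v_l` are both of order `u |s_h + t_h|`, and the
  rounding error of `w` is about `2u² |S|` at most.

In both cases the last `Fast2Sum` is exact because `v_h = 0` or `|w| ≤ |v_h|`. The bound holds with
`C = 0`. Exactness of the two error-free transformations is proved by following the grids `2^e ℤ` on
which the intermediate quantities lie.
-/

/-- The radix-2, precision-`p` floating-point numbers with unlimited exponent range. -/
def Fp (p : ℕ) : Set ℝ := {x : ℝ | ∃ M e : ℤ, |M| ≤ 2 ^ p - 1 ∧ x = (M : ℝ) * (2 : ℝ) ^ e}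

/-- Round toward `-∞`: the largest floating-point number `≤ x`. -/
noncomputable def RD (p : ℕ) (x : ℝ) : ℝ := sSup {f : ℝ | f ∈ Fp p ∧ f ≤ x}

/-- Round toward `+∞`: the smallest floating-point number `≥ x`. -/
noncomputable def RU (p : ℕ) (x : ℝ) : ℝ := sInf {f : ℝ | f ∈ Fp p ∧ x ≤ f}

/-- `y` is a faithful rounding of `x`. -/
def Faithful (p : ℕ) (x y : ℝ) : Prop := y = RD p x ∨ y = RU p x

/-- `RN` is a round-to-nearest function for precision `p`. -/
def IsRN (p : ℕ) (RN : ℝ → ℝ) : Prop :=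
  (∀ x : ℝ, RN x ∈ Fp p) ∧ ∀ x f : ℝ, f ∈ Fp p → |RN x - x| ≤ |f - x|

/-- `RN` is symmetric. -/
def SymRN (RN : ℝ → ℝ) : Prop := ∀ x : ℝ, RN (-x) = -RN x

/-- `2Sum(a,b)` with rounding function `R`. -/
noncomputable def twoSum (R : ℝ → ℝ) (a b : ℝ) : ℝ × ℝ :=
  let s := R (a + b)
  let a' := R (s - b)
  let b' := R (s - a')
  (s, R (R (a - a') + R (b - b')))

/-- `Fast2Sum(a,b)` with rounding function `R`. -/
noncomputable def fast2Sum (R : ℝ → ℝ) (a b : ℝ) : ℝ × ℝ :=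
  let s := R (a + b)
  let d := R (s - a)
  (s, R (b - d))

/-- Accurate double-word addition with rounding function `R`. -/
noncomputable def accurateAdd (R : ℝ → ℝ) (xh xl yh yl : ℝ) : ℝ × ℝ :=
  let s := twoSum R xh yh
  let t := twoSum R xl yl
  let c := R (s.2 + t.1)
  let v := fast2Sum R s.1 c
  let w := R (t.2 + v.2)
  fast2Sum R v.1 w

/-- `x` is an integer multiple of `2^e`. -/
def OnGrid (e : ℤ) (x : ℝ) : Prop := ∃ k : ℤ, x = (k : ℝ) * (2 : ℝ) ^ e

/-! ### Grids and floating-point numbers -/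

lemma OnGrid.add {e : ℤ} {x y : ℝ} (hx : OnGrid e x) (hy : OnGrid e y) : OnGrid e (x + y) := by
  obtain ⟨k, rfl⟩ := hx
  obtain ⟨l, rfl⟩ := hy
  exact ⟨k + l, by push_cast; ring⟩

lemma OnGrid.sub {e : ℤ} {x y : ℝ} (hx : OnGrid e x) (hy : OnGrid e y) : OnGrid e (x - y) := by
  obtain ⟨k, rfl⟩ := hx
  obtain ⟨l, rfl⟩ := hy
  exact ⟨k - l, by push_cast; ring⟩

lemma OnGrid.mono {e e' : ℤ} {x : ℝ} (hx : OnGrid e x) (h : e' ≤ e) : OnGrid e' x := by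
  obtain ⟨k, rfl⟩ := hx
  obtain ⟨n, hn⟩ := Int.eq_ofNat_of_zero_le (sub_nonneg.2 h)
  refine ⟨k * 2 ^ n, ?_⟩
  have : e = n + e' := by omega
  rw [this, zpow_add₀ two_ne_zero, zpow_natCast]
  push_cast
  ring

lemma OnGrid.eq_zero_or_le {e : ℤ} {x : ℝ} (hx : OnGrid e x) : x = 0 ∨ (2 : ℝ) ^ e ≤ |x| := by
  obtain ⟨k, rfl⟩ := hx
  by_cases hk : k = 0
  · left; simp [hk]
  · right
    have h1 : (1 : ℝ) ≤ |(k : ℝ)| := by exact_mod_cast Int.one_le_abs hk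
    have h2 : (0 : ℝ) < (2 : ℝ) ^ e := by positivity
    rw [abs_mul, abs_of_pos h2]
    nlinarith

lemma mem_Fp_of_onGrid {p : ℕ} (hp : 1 ≤ p) {e : ℤ} {x : ℝ} (hx : OnGrid e x)
    (h : |x| ≤ (2 : ℝ) ^ p * (2 : ℝ) ^ e) : x ∈ Fp p := by
  obtain ⟨k, rfl⟩ := hx
  have h2 : (0 : ℝ) < (2 : ℝ) ^ e := by positivity
  rw [abs_mul, abs_of_pos h2] at h
  have hk : |k| ≤ 2 ^ p := by exact_mod_cast le_of_mul_le_mul_right h h2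
  have hP : (2 : ℤ) ^ 1 ≤ 2 ^ p := pow_le_pow_right₀ (by norm_num) hp
  rcases hk.lt_or_eq with hlt | heq
  · exact ⟨k, e, by omega, rfl⟩
  · -- `k = ±2^p` is renormalized to significand `±1`.
    have hz : (2 : ℝ) ^ ((p : ℤ) + e) = (2 : ℝ) ^ p * (2 : ℝ) ^ e := by
      rw [zpow_add₀ two_ne_zero, zpow_natCast]
    rcases abs_choice k with hc | hc
    · refine ⟨1, p + e, by rw [abs_one]; omega, ?_⟩
      have : k = 2 ^ p := by omega
      rw [hz, this]; push_cast; ring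
    · refine ⟨-1, p + e, by rw [abs_neg, abs_one]; omega, ?_⟩
      have : k = -2 ^ p := by omega
      rw [hz, this]; push_cast; ring

lemma exists_onGrid {p : ℕ} {x : ℝ} (hx : x ∈ Fp p) :
    ∃ e : ℤ, OnGrid e x ∧ |x| ≤ ((2 : ℝ) ^ p - 1) * (2 : ℝ) ^ e := by
  obtain ⟨M, e, hM, rfl⟩ := hx
  refine ⟨e, ⟨M, rfl⟩, ?_⟩
  rw [abs_mul, abs_of_pos (show (0 : ℝ) < (2 : ℝ) ^ e by positivity)]
  gcongr
  exact_mod_cast hM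

/-- A large floating-point number lies on a coarse grid. -/
lemma onGrid_of_le {p : ℕ} {x : ℝ} (hx : x ∈ Fp p) {e : ℤ}
    (h : (2 : ℝ) ^ p * (2 : ℝ) ^ e ≤ |x|) : OnGrid (e + 1) x := by
  obtain ⟨f, hf, hb⟩ := exists_onGrid hx
  refine hf.mono ?_
  have h2 : (0 : ℝ) < (2 : ℝ) ^ f := by positivity
  have hP : (0 : ℝ) < (2 : ℝ) ^ p := by positivity
  have h3 : (2 : ℝ) ^ e < (2 : ℝ) ^ f := by
    by_contra! hc
    nlinarith
  have := (zpow_lt_zpow_iff_right₀ (one_lt_two (α := ℝ))).1 h3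
  omega

lemma zero_mem_Fp (p : ℕ) : (0 : ℝ) ∈ Fp p :=
  ⟨0, 0, by rw [abs_zero, sub_nonneg]; exact one_le_pow₀ (by norm_num), by simp⟩

lemma neg_mem_Fp {p : ℕ} {x : ℝ} (hx : x ∈ Fp p) : -x ∈ Fp p := by
  obtain ⟨M, e, hM, rfl⟩ := hx
  exact ⟨-M, e, by rwa [abs_neg], by push_cast; ring⟩

/-- Two floating-point numbers lie on a common grid on which one of them has a `p`-bit
significand. -/
lemma exists_common_grid {p : ℕ} {a b : ℝ} (ha : a ∈ Fp p) (hb : b ∈ Fp p) :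
    ∃ e : ℤ, OnGrid e a ∧ OnGrid e b ∧ (|a| ≤ ((2 : ℝ) ^ p - 1) * (2 : ℝ) ^ e ∨
      |b| ≤ ((2 : ℝ) ^ p - 1) * (2 : ℝ) ^ e) := by
  obtain ⟨e, h1, h2⟩ := exists_onGrid ha
  obtain ⟨f, h3, h4⟩ := exists_onGrid hb
  rcases le_total e f with h | h
  · exact ⟨e, h1, h3.mono h, Or.inl h2⟩
  · exact ⟨f, h1.mono h, h3, Or.inr h4⟩

/-- Sterbenz's lemma, in the form: a sum no larger than either operand is exact. -/
lemma sterbenz {p : ℕ} (hp : 1 ≤ p) {a b : ℝ} (ha : a ∈ Fp p) (hb : b ∈ Fp p)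
    (h1 : |a + b| ≤ |a|) (h2 : |a + b| ≤ |b|) : a + b ∈ Fp p := by
  obtain ⟨e, ga, gb, h⟩ := exists_common_grid ha hb
  refine mem_Fp_of_onGrid hp (ga.add gb) ?_
  have : (0 : ℝ) < (2 : ℝ) ^ e := by positivity
  rcases h with h | h <;> nlinarith

/-! ### Rounding to nearest -/

lemma IsRN.eq_self {p : ℕ} {R : ℝ → ℝ} (hR : IsRN p R) {x : ℝ} (hx : x ∈ Fp p) : R x = x := by
  have := hR.2 x x hx
  rw [sub_self, abs_zero] at this
  linarith [abs_nonpos_iff.1 this]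

/-- Rounding does not drop below a floating-point magnitude. -/
lemma IsRN.le_abs {p : ℕ} {R : ℝ → ℝ} (hR : IsRN p R) {x f : ℝ} (hf : f ∈ Fp p) (h : |f| ≤ |x|) :
    |f| ≤ |R x| := by
  have habs : |f| ∈ Fp p := by
    rcases abs_choice f with h | h <;> rw [h]
    exacts [hf, neg_mem_Fp hf]
  by_contra! hc
  have h1 := hR.2 x _ habs
  have h2 := hR.2 x _ (neg_mem_Fp habs)
  rw [abs_lt] at hc
  rcases le_total 0 x with hx | hx
  · rw [abs_of_nonneg hx] at h
    rw [abs_of_nonpos (by linarith), abs_of_nonpos (by linarith)] at h1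
    linarith
  · rw [abs_of_nonpos hx] at h
    rw [abs_of_nonneg (by linarith), abs_of_nonneg (by linarith)] at h2
    linarith

/-- The rounding error is at most half a unit in the last place. -/
lemma IsRN.abs_sub_le {p : ℕ} (hp : 1 ≤ p) {R : ℝ → ℝ} (hR : IsRN p R) {x : ℝ} {e : ℤ}
    (h : |x| ≤ (2 : ℝ) ^ p * (2 : ℝ) ^ e) : |R x - x| ≤ (2 : ℝ) ^ e / 2 := by
  have h2 : (0 : ℝ) < (2 : ℝ) ^ e := by positivity
  set y := x / (2 : ℝ) ^ e with hy
  have hxy : x = y * (2 : ℝ) ^ e := by rw [hy]; field_simp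
  have hr : |(round y : ℝ) - y| ≤ 1 / 2 := by rw [abs_sub_comm]; exact abs_sub_round y
  have hyP : |y| ≤ (2 : ℝ) ^ p := by
    rw [hxy, abs_mul, abs_of_pos h2] at h
    exact le_of_mul_le_mul_right h h2
  have hk : |round y| ≤ 2 ^ p := by
    have h3 : |(round y : ℝ)| < 2 ^ p + 1 := by
      rw [abs_le] at hyP hr
      rw [abs_lt]
      constructor <;> linarith [hyP.1, hyP.2, hr.1, hr.2]
    have h4 : |round y| < 2 ^ p + 1 := by exact_mod_cast h3
    omega
  have hmem : (round y : ℝ) * (2 : ℝ) ^ e ∈ Fp p := by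
    refine mem_Fp_of_onGrid hp ⟨round y, rfl⟩ ?_
    rw [abs_mul, abs_of_pos h2]
    gcongr
    exact_mod_cast hk
  refine (hR.2 x _ hmem).trans ?_
  have : (round y : ℝ) * (2 : ℝ) ^ e - x = ((round y : ℝ) - y) * (2 : ℝ) ^ e := by
    rw [hxy]; ring
  rw [this, abs_mul, abs_of_pos h2]
  nlinarith

/-- The exponent range in which a nonzero real lies, scaled by the precision. -/
lemma exists_binade (p : ℕ) {x : ℝ} (hx : x ≠ 0) :
    ∃ g : ℤ, (2 : ℝ) ^ p * (2 : ℝ) ^ g ≤ |x| ∧ |x| ≤ (2 : ℝ) ^ p * (2 : ℝ) ^ (g + 1) := by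
  obtain ⟨n, h1, h2⟩ := exists_mem_Ico_zpow (abs_pos.2 hx) (one_lt_two (α := ℝ))
  refine ⟨n - p, ?_, ?_⟩ <;> rw [← zpow_natCast, ← zpow_add₀ two_ne_zero]
  · rwa [add_sub_cancel]
  · refine h2.le.trans (le_of_eq ?_); congr 1; ring

lemma IsRN.abs_sub_le_rel {p : ℕ} (hp : 1 ≤ p) {R : ℝ → ℝ} (hR : IsRN p R) (x : ℝ) :
    (2 : ℝ) ^ p * |R x - x| ≤ |x| := by
  by_cases hx : x = 0
  · subst hx; rw [hR.eq_self (zero_mem_Fp p)]; simp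
  obtain ⟨g, h1, h2⟩ := exists_binade p hx
  have h3 := hR.abs_sub_le hp h2
  rw [zpow_add_one₀ two_ne_zero] at h3
  have hP : (0 : ℝ) < (2 : ℝ) ^ p := by positivity
  nlinarith

/-- The rounding of a large real lies on a coarse grid. -/
lemma IsRN.onGrid_of_large {p : ℕ} (hp : 1 ≤ p) {R : ℝ → ℝ} (hR : IsRN p R) {x : ℝ} {e : ℤ}
    (h : (2 : ℝ) ^ p * (2 : ℝ) ^ e ≤ |x|) : OnGrid e (R x) := by
  have hpos : (0 : ℝ) ≤ (2 : ℝ) ^ p * (2 : ℝ) ^ e := by positivity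
  have hm : (2 : ℝ) ^ p * (2 : ℝ) ^ e ∈ Fp p :=
    mem_Fp_of_onGrid hp ⟨2 ^ p, by push_cast; rfl⟩ (abs_of_nonneg hpos).le
  have h3 := hR.le_abs (x := x) hm (by rwa [abs_of_nonneg hpos])
  rw [abs_of_nonneg hpos] at h3
  exact (onGrid_of_le (hR.1 x) h3).mono (by omega)

/-- Rounding maps a grid to itself. -/
lemma IsRN.onGrid {p : ℕ} (hp : 1 ≤ p) {R : ℝ → ℝ} (hR : IsRN p R) {x : ℝ} {e : ℤ}
    (hx : OnGrid e x) : OnGrid e (R x) := by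
  rcases le_total |x| ((2 : ℝ) ^ p * (2 : ℝ) ^ e) with h | h
  · rwa [hR.eq_self (mem_Fp_of_onGrid hp hx h)]
  · exact hR.onGrid_of_large hp h

/-- The error of a rounded addition is a floating-point number. -/
lemma IsRN.add_error_mem {p : ℕ} (hp : 1 ≤ p) {R : ℝ → ℝ} (hR : IsRN p R) {a b : ℝ}
    (ha : a ∈ Fp p) (hb : b ∈ Fp p) : a + b - R (a + b) ∈ Fp p := by
  obtain ⟨e, ga, gb, h⟩ := exists_common_grid ha hb
  refine mem_Fp_of_onGrid hp ((ga.add gb).sub (hR.onGrid hp (ga.add gb))) ?_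
  have h2 : (0 : ℝ) < (2 : ℝ) ^ e := by positivity
  have h3 := hR.2 (a + b) a ha
  have h4 := hR.2 (a + b) b hb
  rw [show a - (a + b) = -b by ring, abs_neg] at h3
  rw [show b - (a + b) = -a by ring, abs_neg] at h4
  rw [abs_sub_comm]
  rcases h with h | h <;> nlinarith

/-! ### Exactness of Fast2Sum and 2Sum -/

/-- If `a` is a multiple of a unit on which `b` has a `p`-bit significand, the subtraction
`R (a + b) - a` is exact. No comparison of `|a|` with `|b|` is required. -/
lemma IsRN.sub_mem {p : ℕ} (hp : 2 ≤ p) {R : ℝ → ℝ} (hR : IsRN p R) {a b : ℝ} {e : ℤ}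
    (ha : a ∈ Fp p) (hb : b ∈ Fp p) (ga : OnGrid e a) (gb : OnGrid e b)
    (h : |b| ≤ ((2 : ℝ) ^ p - 1) * (2 : ℝ) ^ e) : R (a + b) - a ∈ Fp p := by
  have hp1 : 1 ≤ p := by omega
  rcases le_or_gt |a + b| ((2 : ℝ) ^ p * (2 : ℝ) ^ e) with hs | hs
  · rw [hR.eq_self (mem_Fp_of_onGrid hp1 (ga.add gb) hs), add_sub_cancel_left]
    exact hb
  have h2 : (0 : ℝ) < (2 : ℝ) ^ e := by positivity
  have hP : (4 : ℝ) ≤ (2 : ℝ) ^ p := by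
    calc (4 : ℝ) = 2 ^ 2 := by norm_num
      _ ≤ 2 ^ p := pow_le_pow_right₀ (by norm_num) hp
  have hne : a + b ≠ 0 := by
    intro h0
    rw [h0, abs_zero] at hs
    nlinarith
  obtain ⟨g, hg1, hg2⟩ := exists_binade p hne
  have heg : e ≤ g := by
    have h3 : (2 : ℝ) ^ e < (2 : ℝ) ^ (g + 1) :=
      lt_of_mul_lt_mul_left (hs.trans_le hg2) (by positivity)
    have := (zpow_lt_zpow_iff_right₀ (one_lt_two (α := ℝ))).1 h3
    omega
  have hle : (2 : ℝ) ^ e ≤ (2 : ℝ) ^ g := zpow_le_zpow_right₀ (by norm_num) heg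
  have hg0 : (0 : ℝ) < (2 : ℝ) ^ g := by positivity
  -- `2^g` is half the unit in the last place of `R (a + b)`; `a` is a multiple of it, too.
  have gag : OnGrid g a := by
    rcases heg.eq_or_lt with rfl | hlt
    · exact ga
    have h5 : (2 : ℝ) ^ e ≤ (2 : ℝ) ^ (g - 1) := zpow_le_zpow_right₀ (by norm_num) (by omega)
    have h6 : (2 : ℝ) ^ g = (2 : ℝ) ^ (g - 1) * 2 := by
      rw [← zpow_add_one₀ two_ne_zero]; congr 1; ring
    have h7 : |a + b| ≤ |a| + |b| := abs_add_le a b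
    have h8 : (2 : ℝ) ^ p * (2 : ℝ) ^ (g - 1) ≤ |a| := by
      rw [h6] at hg1
      nlinarith
    have := onGrid_of_le ha h8
    rwa [sub_add_cancel] at this
  have gs : OnGrid g (R (a + b)) := hR.onGrid_of_large hp1 hg1
  refine mem_Fp_of_onGrid hp1 (gs.sub gag) ?_
  have h9 := hR.abs_sub_le hp1 hg2
  rw [zpow_add_one₀ two_ne_zero] at h9
  have h10 : |R (a + b) - a| ≤ |R (a + b) - (a + b)| + |b| := by
    calc |R (a + b) - a| = |(R (a + b) - (a + b)) + b| := by congr 1; ring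
      _ ≤ _ := abs_add_le _ _
  nlinarith

lemma exists_grid_of_abs_le {p : ℕ} {a b : ℝ} (ha : a ∈ Fp p) (hb : b ∈ Fp p) (h : |b| ≤ |a|) :
    ∃ e : ℤ, OnGrid e a ∧ OnGrid e b ∧ |b| ≤ ((2 : ℝ) ^ p - 1) * (2 : ℝ) ^ e := by
  obtain ⟨e, ga, gb, h' | h'⟩ := exists_common_grid ha hb
  exacts [⟨e, ga, gb, h.trans h'⟩, ⟨e, ga, gb, h'⟩]

lemma fast2Sum_exact {p : ℕ} (hp : 2 ≤ p) {R : ℝ → ℝ} (hR : IsRN p R) {a b : ℝ} {e : ℤ}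
    (ha : a ∈ Fp p) (hb : b ∈ Fp p) (ga : OnGrid e a) (gb : OnGrid e b)
    (h : |b| ≤ ((2 : ℝ) ^ p - 1) * (2 : ℝ) ^ e) :
    fast2Sum R a b = (R (a + b), a + b - R (a + b)) := by
  have h1 := hR.eq_self (hR.sub_mem hp ha hb ga gb h)
  have h2 := hR.eq_self (hR.add_error_mem (by omega) ha hb)
  simp only [fast2Sum, h1]
  rw [show b - (R (a + b) - a) = a + b - R (a + b) by ring, h2]

lemma fast2Sum_exact_of_abs_le {p : ℕ} (hp : 2 ≤ p) {R : ℝ → ℝ} (hR : IsRN p R) {a b : ℝ}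
    (ha : a ∈ Fp p) (hb : b ∈ Fp p) (h : a = 0 ∨ |b| ≤ |a|) :
    fast2Sum R a b = (R (a + b), a + b - R (a + b)) := by
  rcases h with rfl | h
  · obtain ⟨e, gb, h⟩ := exists_onGrid hb
    exact fast2Sum_exact hp hR ha hb ⟨0, by simp⟩ gb h
  · obtain ⟨e, ga, gb, h⟩ := exists_grid_of_abs_le ha hb h
    exact fast2Sum_exact hp hR ha hb ga gb h

lemma twoSum_of_mem {p : ℕ} {R : ℝ → ℝ} (hR : IsRN p R) {a b : ℝ}
    (ha : a ∈ Fp p) (hb : b ∈ Fp p) (hab : a + b ∈ Fp p) : twoSum R a b = (a + b, 0) := by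
  have h0 := hR.eq_self (zero_mem_Fp p)
  simp [twoSum, hR.eq_self hab, hR.eq_self ha, hR.eq_self hb, h0]

/-- Exactness of 2Sum for any tie-breaking rule. The precision bound is what makes `a` and
`R (s - b)` close enough for Sterbenz's lemma. -/
lemma twoSum_exact {p : ℕ} (hp : 4 ≤ p) {R : ℝ → ℝ} (hR : IsRN p R) {a b : ℝ}
    (ha : a ∈ Fp p) (hb : b ∈ Fp p) :
    twoSum R a b = (R (a + b), a + b - R (a + b)) := by
  have hp1 : 1 ≤ p := by omega
  have hp2 : 2 ≤ p := by omega
  have h0 := hR.eq_self (zero_mem_Fp p)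
  have herr := hR.eq_self (hR.add_error_mem hp1 ha hb)
  rcases le_or_gt |a| |b| with hab | hab
  · -- The first steps are a Fast2Sum of `b` and `a`, and `b' = b`.
    obtain ⟨e, gb, ga, h⟩ := exists_grid_of_abs_le hb ha hab
    have h1 := hR.sub_mem hp2 hb ha gb ga h
    rw [add_comm b a] at h1
    have h2 : R (a - (R (a + b) - b)) = a + b - R (a + b) := by
      rw [show a - (R (a + b) - b) = a + b - R (a + b) by ring, herr]
    simp [twoSum, hR.eq_self h1, hR.eq_self hb, h0, h2, herr]
  by_cases hs : |R (a + b)| < |b|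
  · have h1 : |a + b| < |b| := by
      by_contra! hc
      exact absurd (hR.le_abs hb hc) (not_le.2 hs)
    have h2 := sterbenz hp1 ha hb (by linarith) h1.le
    rw [twoSum_of_mem hR ha hb h2, hR.eq_self h2, sub_self]
  push Not at hs
  set s := R (a + b) with hsdef
  have hsF : s ∈ Fp p := hR.1 _
  have hnb := neg_mem_Fp hb
  -- `s` and `-b` satisfy the condition of Fast2Sum.
  obtain ⟨e, gs, gb, h⟩ := exists_grid_of_abs_le hsF hnb (by rwa [abs_neg])
  have h1 := hR.sub_mem hp2 hsF hnb gs gb h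
  have h2 := hR.add_error_mem hp1 hsF hnb
  rw [← sub_eq_add_neg] at h1 h2
  set a' := R (s - b) with hadef
  have ha'F : a' ∈ Fp p := hR.1 _
  have h3 : R (s - a') = s - a' := by
    have := neg_mem_Fp h1
    rw [neg_sub] at this
    exact hR.eq_self this
  have h4 : R (b - (s - a')) = b - (s - a') := by
    have := neg_mem_Fp h2
    rw [show -(s - b - a') = b - (s - a') by ring] at this
    exact hR.eq_self this
  -- `a'` is within `2 |s - (a + b)|` of `a`, and that is at most `4 u |a|`.
  have h5 : R (a - a') = a - a' := by
    have hP : (16 : ℝ) ≤ (2 : ℝ) ^ p := by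
      calc (16 : ℝ) = 2 ^ 4 := by norm_num
        _ ≤ 2 ^ p := pow_le_pow_right₀ (by norm_num) hp
    have e1 := hR.2 (s - b) a ha
    rw [← hadef, show a - (s - b) = -(s - (a + b)) by ring, abs_neg] at e1
    have e2 := hR.abs_sub_le_rel hp1 (a + b)
    rw [← hsdef] at e2
    have e3 : |a + b| ≤ |a| + |b| := abs_add_le a b
    have e4 : |a' - a| ≤ |a' - (s - b)| + |s - (a + b)| := by
      calc |a' - a| = |(a' - (s - b)) + (s - (a + b))| := by congr 1; ring
        _ ≤ _ := abs_add_le _ _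
    have e5 : 16 * |s - (a + b)| ≤ 2 * |a| := by
      nlinarith [abs_nonneg (s - (a + b))]
    have e6 : |a' - a| ≤ |a| / 4 := by linarith
    have e7 : |a| ≤ |a'| + |a' - a| := by
      calc |a| = |a' - (a' - a)| := by congr 1; ring
        _ ≤ _ := abs_sub _ _
    have e8 : a + -a' ∈ Fp p := by
      have e9 : |a + -a'| = |a' - a| := by rw [← sub_eq_add_neg, abs_sub_comm]
      refine sterbenz hp1 ha (neg_mem_Fp ha'F) ?_ ?_
      · rw [e9]; linarith [abs_nonneg a]
      · rw [e9, abs_neg]; linarith [abs_nonneg a]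
    rw [← sub_eq_add_neg] at e8
    exact hR.eq_self e8
  simp only [twoSum, ← hsdef, ← hadef, h3, h4, h5]
  rw [show a - a' + (b - (s - a')) = a + b - s by ring, herr]

/-! ### The error bound -/

theorem accurate_relerr_bound_sterbenz :
    ∃ C : ℝ, 0 ≤ C ∧
      ∀ (p : ℕ), 6 ≤ p → ∀ RN : ℝ → ℝ, IsRN p RN → SymRN RN →
        ∀ u ox oy : ℝ, u = (2 : ℝ) ^ (-(p : ℤ)) →
          1 ≤ ox → ox ≤ 1 / (8 * u) - 2 → 1 ≤ oy → oy ≤ 1 / (8 * u) - 2 →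
          ∀ xh xl yh yl : ℝ, xh ∈ Fp p → xl ∈ Fp p → yh ∈ Fp p → yl ∈ Fp p →
            |xl| ≤ ox * u * |xh| → |yl| ≤ oy * u * |yh| →
            xh * yh < 0 → max |xh| |yh| ≤ 2 * min |xh| |yh| →
            |(accurateAdd RN xh xl yh yl).1 + (accurateAdd RN xh xl yh yl).2 -
                (xh + xl + yh + yl)| ≤
              (4 * u ^ 2 + C * u ^ 3) * |xh + xl + yh + yl| := by
  refine ⟨0, le_rfl, ?_⟩
  intro p hp R hR _ u ox oy hu hox1 hox hoy1 hoy xh xl yh yl hxh hxl hyh hyl hx hy hneg hmax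
  have hp1 : 1 ≤ p := by omega
  have hp2 : 2 ≤ p := by omega
  have hP : (64 : ℝ) ≤ (2 : ℝ) ^ p := by
    calc (64 : ℝ) = 2 ^ 6 := by norm_num
      _ ≤ 2 ^ p := pow_le_pow_right₀ (by norm_num) hp
  have huP : u * (2 : ℝ) ^ p = 1 := by
    rw [hu, zpow_neg, zpow_natCast]
    exact inv_mul_cancel₀ (by positivity)
  have hu0 : 0 < u := by rw [hu]; positivity
  have hu64 : u ≤ 1 / 64 := by nlinarith
  have hrel : ∀ x, |R x - x| ≤ u * |x| := by
    intro x
    have h1 := mul_le_mul_of_nonneg_left (hR.abs_sub_le_rel hp1 x) hu0.le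
    rwa [← mul_assoc, huP, one_mul] at h1
  -- The low words are at most an eighth of the high words.
  have hsmall : ∀ o : ℝ, o ≤ 1 / (8 * u) - 2 → o * u ≤ 1 / 8 := by
    intro o ho
    have h1 := mul_le_mul_of_nonneg_right ho hu0.le
    have h2 : (1 / (8 * u) - 2) * u = 1 / 8 - 2 * u := by field_simp
    linarith
  have hxl8 : |xl| ≤ 1 / 8 * |xh| :=
    hx.trans (mul_le_mul_of_nonneg_right (hsmall ox hox) (abs_nonneg _))
  have hyl8 : |yl| ≤ 1 / 8 * |yh| :=
    hy.trans (mul_le_mul_of_nonneg_right (hsmall oy hoy) (abs_nonneg _))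
  have hm1 : |xh| ≤ 2 * |yh| :=
    (le_max_left _ _).trans (hmax.trans (by gcongr; exact min_le_right _ _))
  have hm2 : |yh| ≤ 2 * |xh| :=
    (le_max_right _ _).trans (hmax.trans (by gcongr; exact min_le_left _ _))
  have hst : |xh + yh| ≤ |xh| ∧ |xh + yh| ≤ |yh| := by
    rcases mul_neg_iff.1 hneg with ⟨h1, h2⟩ | ⟨h1, h2⟩
    · rw [abs_of_pos h1, abs_of_neg h2] at *
      constructor <;> rw [abs_le] <;> constructor <;> linarith
    · rw [abs_of_neg h1, abs_of_pos h2] at *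
      constructor <;> rw [abs_le] <;> constructor <;> linarith
  have hshF : xh + yh ∈ Fp p := sterbenz hp1 hxh hyh hst.1 hst.2
  have hs2 := twoSum_of_mem hR hxh hyh hshF
  have ht2 := twoSum_exact (by omega) hR hxl hyl
  have htlF := hR.add_error_mem hp1 hxl hyl
  have hthF : R (xl + yl) ∈ Fp p := hR.1 _
  have htl := hrel (xl + yl)
  set sh := xh + yh with hsh
  set th := R (xl + yl) with hth
  set tl := xl + yl - th with htldef
  have hlo : |xl + yl| ≤ |xl| + |yl| := abs_add_le _ _
  rw [abs_sub_comm, ← htldef] at htl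
  have hsum1 : |th| ≤ |xl + yl| + |tl| := by
    calc |th| = |(xl + yl) - tl| := by congr 1; rw [htldef]; ring
      _ ≤ _ := abs_sub _ _
  have hsum2 : |xl + yl| ≤ |th| + |tl| := by
    calc |xl + yl| = |th + tl| := by congr 1; rw [htldef]; ring
      _ ≤ _ := abs_add_le _ _
  have htl' : (1 - u) * |tl| ≤ u * |th| := by
    linarith [mul_le_mul_of_nonneg_left hsum2 hu0.le]
  have htlu : |tl| ≤ |xl + yl| := by
    have h1 : u * |xl + yl| ≤ 1 / 64 * |xl + yl| := by gcongr
    linarith [abs_nonneg (xl + yl)]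
  have hthx : |th| ≤ |xh| := by linarith [abs_nonneg xh]
  have hthy : |th| ≤ |yh| := by linarith [abs_nonneg yh]
  -- A common grid for `sh` and `th` on which `th` has a `p`-bit significand.
  obtain ⟨e, gs, gt, he⟩ : ∃ e : ℤ, OnGrid e sh ∧ OnGrid e th ∧
      |th| ≤ ((2 : ℝ) ^ p - 1) * (2 : ℝ) ^ e := by
    obtain ⟨e0, gx, gy, h0⟩ := exists_common_grid hxh hyh
    obtain ⟨e1, g1, h1⟩ := exists_onGrid hthF
    have h0' : |th| ≤ ((2 : ℝ) ^ p - 1) * (2 : ℝ) ^ e0 := by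
      rcases h0 with h | h
      exacts [hthx.trans h, hthy.trans h]
    rcases le_total e0 e1 with h | h
    · exact ⟨e0, gx.add gy, g1.mono h, h0'⟩
    · exact ⟨e1, (gx.add gy).mono h, g1, h1⟩
  have hv2 := fast2Sum_exact hp2 hR hshF hthF gs gt he
  have hvhF : R (sh + th) ∈ Fp p := hR.1 _
  have hvl := hrel (sh + th)
  set vh := R (sh + th) with hvh
  set vl := sh + th - vh with hvldef
  rw [abs_sub_comm, ← hvldef] at hvl
  have hwF : R (tl + vl) ∈ Fp p := hR.1 _
  have hwerr := hrel (tl + vl)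
  have h2e : (0 : ℝ) < (2 : ℝ) ^ e := by positivity
  -- Either `w` is exact, or `th` is dominated by `sh + th`; the last Fast2Sum is exact anyway.
  have key : (vh = 0 ∨ |R (tl + vl)| ≤ |vh|) ∧
      |R (tl + vl) - (tl + vl)| ≤ 4 * u ^ 2 * |sh + th + tl| := by
    rcases le_or_gt |sh + th| ((2 : ℝ) ^ p * (2 : ℝ) ^ e) with hA | hA
    · have hvh' : vh = sh + th := hR.eq_self (mem_Fp_of_onGrid hp1 (gs.add gt) hA)
      have hvl0 : vl = 0 := by rw [hvldef, hvh', sub_self]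
      rw [hvl0, add_zero, hR.eq_self htlF, sub_self, abs_zero]
      refine ⟨?_, by positivity⟩
      rw [hvh']
      refine (gs.add gt).eq_zero_or_le.imp_right fun h => le_trans ?_ h
      -- `u (2^p - 1) = 1 - u` turns the bound on `th` into `|tl| ≤ 2^e`.
      have h1 : (1 - u) * |tl| ≤ (1 - u) * (2 : ℝ) ^ e := by
        calc (1 - u) * |tl| ≤ u * |th| := htl'
          _ ≤ u * (((2 : ℝ) ^ p - 1) * (2 : ℝ) ^ e) := by gcongr
          _ = (u * (2 : ℝ) ^ p - u) * (2 : ℝ) ^ e := by ring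
          _ = (1 - u) * (2 : ℝ) ^ e := by rw [huP]
      exact le_of_mul_le_mul_left h1 (by linarith)
    · have hthA : |th| ≤ |sh + th| := by linarith
      set A := |sh + th| with hAdef
      have hA0 : 0 ≤ A := abs_nonneg _
      have htlA : (1 - u) * |tl| ≤ u * A := htl'.trans (by gcongr)
      have htlB : |tl| ≤ 3 / 2 * u * A := by
        have h1 : u * |tl| ≤ 1 / 64 * |tl| := by gcongr
        linarith [abs_nonneg tl, mul_nonneg hu0.le hA0]
      have hsumv : |tl + vl| ≤ 5 / 2 * u * A := by
        linarith [abs_add_le tl vl]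
      have hS : A ≤ |sh + th + tl| + |tl| := by
        calc A = |(sh + th + tl) - tl| := by rw [hAdef]; congr 1; ring
          _ ≤ _ := abs_sub _ _
      have hV : A ≤ |vh| + |vl| := by
        calc A = |vh + vl| := by rw [hAdef, hvldef]; congr 1; ring
          _ ≤ _ := abs_add_le _ _
      have hW : |R (tl + vl)| ≤ |R (tl + vl) - (tl + vl)| + |tl + vl| := by
        calc |R (tl + vl)| = |(R (tl + vl) - (tl + vl)) + (tl + vl)| := by congr 1; ring
          _ ≤ _ := abs_add_le _ _
      have huA : u * A ≤ 1 / 64 * A := by gcongr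
      constructor
      · right
        have h1 : u * |tl + vl| ≤ 1 / 64 * |tl + vl| := by gcongr
        linarith
      · have h1 : u * |tl + vl| ≤ u * (5 / 2 * u * A) := by gcongr
        have h2 : 5 / 8 * A ≤ |sh + th + tl| := by linarith
        have h3 : u ^ 2 * (5 / 8 * A) ≤ u ^ 2 * |sh + th + tl| := by gcongr
        linarith [hwerr]
  have hz2 := fast2Sum_exact_of_abs_le hp2 hR hvhF hwF key.1
  have hacc : accurateAdd R xh xl yh yl =
      (R (vh + R (tl + vl)), vh + R (tl + vl) - R (vh + R (tl + vl))) := by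
    simp only [accurateAdd, hs2, ht2, zero_add, hR.eq_self hthF, hv2]
    exact hz2
  rw [hacc]
  have e1 : R (vh + R (tl + vl)) + (vh + R (tl + vl) - R (vh + R (tl + vl))) -
      (xh + xl + yh + yl) = R (tl + vl) - (tl + vl) := by
    rw [htldef, hvldef, hsh]; ring
  have e2 : xh + xl + yh + yl = sh + th + tl := by rw [htldef, hsh]; ring
  rw [e1, e2, zero_mul, add_zero]
  exact key.2
end

section
/- Let A, C, P, D be real numbers and ε_mul, ε_add ≥ 0 real numbers such that |P − A| ≤ ε_mul·|A| (P is the computed product with relative error ε_mul) and |D − (P + C)| ≤ ε_add·(|P| + |C|) (D is the computed sum with modified relative error ε_add). Then the combined multiplication-addition result satisfies |D − (A + C)| ≤ (ε_add + ε_mul·(1 + ε_add))·(|A| + |C|). -/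
/-- Error-composition inequality for a multiply-then-add (MAA) operation: if the
computed product `P` of the exact product `A` has relative error at most `ε_mul`, and
the computed sum `D` of `P + C` has modified relative error at most `ε_add`, then
`|D - (A + C)| ≤ (ε_add + ε_mul·(1 + ε_add))·(|A| + |C|)`. -/
theorem maa_error_composition
    (A C P D emul eadd : ℝ) (hmul : 0 ≤ emul) (hadd : 0 ≤ eadd)
    (hP : |P - A| ≤ emul * |A|)
    (hD : |D - (P + C)| ≤ eadd * (|P| + |C|)) :
    |D - (A + C)| ≤ (eadd + emul * (1 + eadd)) * (|A| + |C|) := by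
  have hPA : |P| ≤ |A| + emul * |A| := by
    linarith [abs_sub_abs_le_abs_sub P A]
  have htri : |D - (A + C)| ≤ |D - (P + C)| + |P - A| := by
    have h := abs_add_le (D - (P + C)) (P - A)
    rwa [show D - (P + C) + (P - A) = D - (A + C) by ring] at h
  have hscaled : eadd * |P| ≤ eadd * (|A| + emul * |A|) :=
    mul_le_mul_of_nonneg_left hPA hadd
  -- The slack left over is the part of the multiplication error charged to `C`.
  have hslack : 0 ≤ emul * (1 + eadd) * |C| := by positivity
  linarith
end
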